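/- Let n ≥ 1, m > n, and let r, p : ℝ^n → [1,∞) be measurable exponents with r⁻ < ∞. Define ζ(τ) = 1/p⁻ for 0 < τ ≤ 1 and ζ(τ) = 1/p⁺ for τ > 1 (with 1/p⁺ = 0 if p⁺ = ∞), and define ϑ(τ) = (r⁻/r⁺)(1 − 1/r⁻) + ζ(τ)(1 − r⁻/r⁺) if either [0 < τ ≤ 1 and 1 − 1/r⁻ ≤ ζ(τ)] or [τ > 1 and 1 − 1/r⁻ > ζ(τ)], and ϑ(τ) = 1 − 1/r⁻ if either [0 < τ ≤ 1 and 1 − 1/r⁻ > ζ(τ)] or [τ > 1 and 1 − 1/r⁻ ≤ ζ(τ)]. Then there exists a constant C > 0 such that for every τ > 0 and every f ∈ L^{p(·)}(ℝ^n) ∩ L^1(ℝ^n), ‖η_{τ,m} * f‖_{L^{r(·)}(ℝ^n)} ≤ C τ^{−nϑ(τ)} ‖f‖_{L^{p(·)}(ℝ^n)∩L^1(ℝ^n)}. -/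

import Mathlib

open MeasureTheory Filter Real
open scoped ENNReal

noncomputable section

/-- Euclidean space `ℝⁿ`. -/
abbrev Esp (n : ℕ) := EuclideanSpace ℝ (Fin n)

/-- The variable exponent modular `ρ_{p(·)}(f) = ∫_{ℝⁿ} |f(x)|^{p(x)} dx`. -/
def vMod (n : ℕ) (p : Esp n → ℝ) (f : Esp n → ℝ) : ℝ≥0∞ :=
  ∫⁻ x, (ENNReal.ofReal |f x|) ^ (p x) ∂volume

/-- The Luxemburg norm `‖f‖_{L^{p(·)}} = inf {λ > 0 : ρ_{p(·)}(f/λ) ≤ 1}`. -/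
def luxNorm (n : ℕ) (p : Esp n → ℝ) (f : Esp n → ℝ) : ℝ :=
  sInf {lam : ℝ | 0 < lam ∧ vMod n p (fun x => f x / lam) ≤ 1}

/-- Membership in the variable exponent Lebesgue space `L^{p(·)}(ℝⁿ)`. -/
def MemVLp (n : ℕ) (p : Esp n → ℝ) (f : Esp n → ℝ) : Prop :=
  AEMeasurable f volume ∧ ∃ lam : ℝ, 0 < lam ∧ vMod n p (fun x => f x / lam) ≤ 1

/-- Global log-Hölder continuity of `1/p` with decay value `l` (representing `l = 1/p_∞`). -/
def IsLogHolder (n : ℕ) (p : Esp n → ℝ) (l : ℝ) : Prop :=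
  ∃ c : ℝ, 0 < c ∧
    (∀ x y : Esp n, |1 / p x - 1 / p y| ≤ c / Real.log (Real.exp 1 + 1 / ‖x - y‖)) ∧
    (∀ x : Esp n, |1 / p x - l| ≤ c / Real.log (Real.exp 1 + ‖x‖))

/-- The kernel `η_{t,m}(x) = t^{-n} (1 + |x|/t)^{-m}`. -/
def etaKer (n : ℕ) (t m : ℝ) (x : Esp n) : ℝ :=
  t ^ (-(n : ℝ)) * (1 + ‖x‖ / t) ^ (-m)

/-- Convolution `(u * v)(x) = ∫ u(x - y) v(y) dy`. -/
def convR (n : ℕ) (u v : Esp n → ℝ) (x : Esp n) : ℝ :=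
  ∫ y, u (x - y) * v y ∂volume


lemma aux_pow {T v rm : ℝ} (hT : 0 < T) (hv : 0 ≤ v) (hvT : v ≤ T) (hrm : 1 ≤ rm) :
    (v / T ^ (1 - 1 / rm)) ^ rm ≤ v := by
  have hrm0 : rm ≠ 0 := by positivity
  rw [Real.div_rpow hv (by positivity), ← Real.rpow_mul hT.le]
  have e : (1 - 1 / rm) * rm = rm - 1 := by field_simp
  rw [e, div_le_iff₀ (by positivity)]
  have : v ^ rm = v * v ^ (rm - 1) := by
    rcases hv.eq_or_lt with h | h
    · rw [← h, Real.zero_rpow hrm0, zero_mul]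
    · rw [Real.rpow_sub_one h.ne']; field_simp
  rw [this]
  gcongr

lemma aux_A {T v rm r z : ℝ} (hT : 0 < T) (hv : 0 ≤ v) (hvT : v ≤ T) (hrm : 1 ≤ rm)
    (hvz : v ≤ T ^ z) (hz : T ^ z ≤ T ^ (1 - 1 / rm)) (hr : rm ≤ r) :
    (v / T ^ (1 - 1 / rm)) ^ r ≤ v := by
  refine le_trans ?_ (aux_pow hT hv hvT hrm)
  have h1 : v / T ^ (1 - 1 / rm) ≤ 1 := by
    rw [div_le_one (by positivity)]; linarith
  exact Real.rpow_le_rpow_of_exponent_ge_of_imp (by positivity) h1 hr (fun _ h => by linarith)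

lemma aux_B {T v rm r z s : ℝ} (hT : 0 < T) (hv : 0 ≤ v) (hvT : v ≤ T) (hrm : 1 ≤ rm)
    (hvz : v ≤ T ^ z) (hz : T ^ (1 - 1 / rm) ≤ T ^ z) (hr : rm ≤ r) (hsr : s * r ≤ rm) :
    (v / T ^ (s * (1 - 1 / rm) + z * (1 - s))) ^ r ≤ v := by
  refine le_trans ?_ (aux_pow hT hv hvT hrm)
  set A := 1 - 1 / rm
  have h1 : v / T ^ z ≤ 1 := by
    rw [div_le_one (by positivity)]; linarith
  have hW : 1 ≤ T ^ z / T ^ A := by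
    rw [one_le_div (by positivity)]; exact hz
  have e : v / T ^ (s * A + z * (1 - s)) = (v / T ^ z) * (T ^ z / T ^ A) ^ s := by
    rw [← Real.rpow_sub hT, ← Real.rpow_mul hT.le, div_mul_eq_mul_div, div_eq_div_iff (by positivity) (by positivity),
      mul_assoc, ← Real.rpow_add hT]
    congr 2
    ring
  have hW0 : 0 ≤ T ^ z / T ^ A := by positivity
  rw [e, Real.mul_rpow (by positivity) (by positivity), ← Real.rpow_mul hW0]
  calc (v / T ^ z) ^ r * (T ^ z / T ^ A) ^ (s * r) ≤ (v / T ^ z) ^ rm * (T ^ z / T ^ A) ^ rm := by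
        refine mul_le_mul ?_ (Real.rpow_le_rpow_of_exponent_le hW hsr) (by positivity) (by positivity)
        · exact Real.rpow_le_rpow_of_exponent_ge_of_imp (by positivity) h1 hr (fun _ h => by linarith)
    _ = _ := by
        rw [← Real.mul_rpow (by positivity) hW0]
        congr 1
        field_simp

lemma aux_essInf {n : ℕ} {r : Esp n → ℝ} (hr : ∀ x, 1 ≤ r x) :
    1 ≤ essInf r volume ∧ ∀ᵐ x, essInf r volume ≤ r x := by
  constructor
  · apply le_csSup
    · by_contra hb
      have h : ∀ k : ℕ, ∀ᵐ x : Esp n, (k : ℝ) ≤ r x := by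
        intro k
        rw [not_bddAbove_iff] at hb
        obtain ⟨a, ha, hk⟩ := hb k
        have ha' : ∀ᶠ y in (ae volume), a ≤ r y := ha
        filter_upwards [ha'] with x hx
        linarith
      rw [← ae_all_iff] at h
      obtain ⟨x, hx⟩ := h.exists
      obtain ⟨k, hk⟩ := exists_nat_gt (r x)
      linarith [hx k]
    · change ∀ᵐ x, 1 ≤ r x
      exact Eventually.of_forall hr
  · exact ae_essInf_le (isBoundedUnder_of ⟨1, hr⟩)

lemma aux_essSup {n : ℕ} {r : Esp n → ℝ} (hr : ∀ x, 1 ≤ r x) :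
    essSup r volume = 0 ∨ (1 ≤ essSup r volume ∧ ∀ᵐ x, r x ≤ essSup r volume) := by
  by_cases h : IsBoundedUnder (· ≤ ·) (ae volume) r
  · right
    have := ae_le_essSup h
    refine ⟨?_, this⟩
    obtain ⟨x, hx⟩ := this.exists
    linarith [hr x]
  · left
    have : {a | ∀ᶠ x in ae volume, r x ≤ a} = ∅ := by
      ext a
      simp only [Set.mem_ofPred_eq, Set.mem_empty_iff_false, iff_false]
      intro ha
      exact h ⟨a, by simpa using ha⟩
    rw [essSup, limsup_eq, this, Real.sInf_empty]

/-- integral of the unscaled kernel -/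
def kerC (n : ℕ) (m : ℝ) : ℝ := ∫ x : Esp n, (1 + ‖x‖) ^ (-m)

lemma kerC_nonneg (n : ℕ) (m : ℝ) : 0 ≤ kerC n m :=
  integral_nonneg fun x => by positivity

lemma eta_nonneg (n : ℕ) {t : ℝ} (ht : 0 < t) (m : ℝ) (x : Esp n) : 0 ≤ etaKer n t m x := by
  unfold etaKer; positivity

lemma eta_meas (n : ℕ) (t m : ℝ) : Measurable (etaKer n t m) := by
  unfold etaKer; fun_prop

lemma eta_le (n : ℕ) {t : ℝ} (ht : 0 < t) {m : ℝ} (hm : 0 ≤ m) (x : Esp n) :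
    etaKer n t m x ≤ t ^ (-(n : ℝ)) := by
  unfold etaKer
  apply mul_le_of_le_one_right (by positivity)
  apply Real.rpow_le_one_of_one_le_of_nonpos
  · have : 0 ≤ ‖x‖ / t := by positivity
    linarith
  · linarith

lemma eta_lintegral (n : ℕ) {t m : ℝ} (ht : 0 < t) (hm : (n : ℝ) < m) :
    ∫⁻ x, ENNReal.ofReal (etaKer n t m x) = ENNReal.ofReal (kerC n m) := by
  have hi : Integrable (fun x : Esp n => (1 + ‖x‖) ^ (-m)) := by
    apply integrable_one_add_norm
    simpa using hm
  have e : ∀ x : Esp n, etaKer n t m x = t ^ (-(n : ℝ)) * (fun x : Esp n => (1 + ‖x‖) ^ (-m)) (t⁻¹ • x) := by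
    intro x
    simp only [etaKer, norm_smul, norm_inv, Real.norm_eq_abs, abs_of_pos ht]
    rw [div_eq_inv_mul]
  have hi2 : Integrable (etaKer n t m) := by
    rw [funext e]
    exact (hi.comp_smul (inv_ne_zero ht.ne')).const_mul _
  rw [← ofReal_integral_eq_lintegral_ofReal hi2 (Eventually.of_forall (eta_nonneg n ht m))]
  congr 1
  simp_rw [e]
  rw [integral_const_mul, Measure.integral_comp_smul volume (fun x : Esp n => (1 + ‖x‖) ^ (-m)) t⁻¹]
  simp only [finrank_euclideanSpace, Fintype.card_fin, inv_pow, inv_inv, smul_eq_mul, kerC]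
  rw [abs_of_pos (by positivity), Real.rpow_neg ht.le, Real.rpow_natCast]
  field_simp

/-- majorant -/
def hMaj (n : ℕ) (t m : ℝ) (f : Esp n → ℝ) (x : Esp n) : ℝ≥0∞ :=
  ∫⁻ y, ENNReal.ofReal (etaKer n t m (x - y)) * ENNReal.ofReal |f y|

lemma conv_le (n : ℕ) {t : ℝ} (ht : 0 < t) (m : ℝ) (f : Esp n → ℝ) (x : Esp n) :
    ENNReal.ofReal |convR n (etaKer n t m) f x| ≤ hMaj n t m f x := by
  rw [← Real.enorm_eq_ofReal_abs]
  refine (enorm_integral_le_lintegral_enorm _).trans (le_of_eq ?_)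
  refine lintegral_congr fun y => ?_
  rw [Real.enorm_eq_ofReal_abs, abs_mul, ENNReal.ofReal_mul (abs_nonneg _),
    abs_of_nonneg (eta_nonneg n ht m _)]

lemma hMaj_lintegral (n : ℕ) {t m : ℝ} (ht : 0 < t) (hm : (n : ℝ) < m) {f : Esp n → ℝ}
    (hf : AEMeasurable f volume) (h1 : ∫⁻ y, ENNReal.ofReal |f y| ≤ 1) :
    ∫⁻ x, hMaj n t m f x ≤ ENNReal.ofReal (kerC n m) := by
  unfold hMaj
  have hF : AEMeasurable (fun y => ENNReal.ofReal |f y|) volume := by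
    simp_rw [← Real.enorm_eq_ofReal_abs]; exact hf.enorm
  rw [lintegral_lintegral_swap]
  · have : ∀ y : Esp n, ∫⁻ x, ENNReal.ofReal (etaKer n t m (x - y)) * ENNReal.ofReal |f y|
        = ENNReal.ofReal (kerC n m) * ENNReal.ofReal |f y| := by
      intro y
      rw [lintegral_mul_const' _ _ ENNReal.ofReal_ne_top,
        lintegral_sub_right_eq_self (fun x => ENNReal.ofReal (etaKer n t m x)), eta_lintegral n ht hm]
    simp_rw [this]
    rw [lintegral_const_mul' _ _ ENNReal.ofReal_ne_top]
    exact mul_le_of_le_one_right (by simp) h1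
  · refine AEMeasurable.mul (f := fun z : Esp n × Esp n => ENNReal.ofReal (etaKer n t m (z.1 - z.2)))
      (g := fun z : Esp n × Esp n => ENNReal.ofReal |f z.2|) ?_ ?_
    · have := eta_meas n t m
      apply Measurable.aemeasurable
      fun_prop
    · exact hF.comp_quasiMeasurePreserving Measure.quasiMeasurePreserving_snd

lemma hMaj_le1 (n : ℕ) {t m : ℝ} (ht : 0 < t) (hm : (n : ℝ) < m) {f : Esp n → ℝ}
    (h1 : ∫⁻ y, ENNReal.ofReal |f y| ≤ 1) (x : Esp n) :
    hMaj n t m f x ≤ ENNReal.ofReal (t ^ (-(n : ℝ))) := by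
  have hm0 : 0 ≤ m := le_trans (by positivity) hm.le
  unfold hMaj
  calc _ ≤ ∫⁻ y, ENNReal.ofReal (t ^ (-(n : ℝ))) * ENNReal.ofReal |f y| := by
        refine lintegral_mono fun y => ?_
        gcongr
        exact eta_le n ht hm0 _
    _ ≤ _ := by
        rw [lintegral_const_mul' _ _ ENNReal.ofReal_ne_top]
        exact mul_le_of_le_one_right (by simp) h1

lemma split_pt {u s q p : ℝ} (hu : 0 ≤ u) (hs : 1 ≤ s) (hq : 1 ≤ q) (hqp : q ≤ p) :
    u ≤ s + s ^ (1 - q) * u ^ p := by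
  have hs0 : 0 < s := by linarith
  rcases le_or_gt u s with h | h
  · have : 0 ≤ s ^ (1 - q) * u ^ p := by positivity
    linarith
  · have hu0 : 0 < u := by linarith
    have h1 : u ≤ s ^ (1 - q) * u ^ p := by
      calc u = u ^ (1 - p) * u ^ p := by
            rw [← Real.rpow_add hu0]; simp
        _ ≤ s ^ (1 - p) * u ^ p := by
            gcongr ?_ * _
            exact Real.rpow_le_rpow_of_nonpos hs0 h.le (by linarith)
        _ ≤ s ^ (1 - q) * u ^ p := by
            gcongr ?_ * _
            exact Real.rpow_le_rpow_of_exponent_le hs (by linarith)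
    linarith

lemma hMaj_le2 (n : ℕ) {t m : ℝ} (ht : 0 < t) (ht1 : t ≤ 1) (hm : (n : ℝ) < m) {f p : Esp n → ℝ}
    {q : ℝ} (hq : 1 ≤ q) (hqp : ∀ᵐ x, q ≤ p x)
    (hp : vMod n p f ≤ 1) (x : Esp n) :
    hMaj n t m f x ≤ ENNReal.ofReal ((kerC n m + 1) * (t ^ (-(n : ℝ))) ^ (1 / q)) := by
  have hm0 : 0 ≤ m := le_trans (by positivity) hm.le
  have hT : 1 ≤ t ^ (-(n : ℝ)) := Real.one_le_rpow_of_pos_of_le_one_of_nonpos ht ht1 (by simp)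
  set T := t ^ (-(n : ℝ)) with hTdef
  have hT0 : 0 < T := by linarith
  set s := T ^ (1 / q) with hsdef
  have hs : 1 ≤ s := Real.one_le_rpow hT (by positivity)
  have hs0 : 0 < s := by linarith
  have hTs : T * s ^ (1 - q) = s := by
    have : T = s ^ q := by
      rw [hsdef, ← Real.rpow_mul hT0.le, one_div_mul_cancel (by positivity), Real.rpow_one]
    rw [this, ← Real.rpow_add hs0]; simp
  unfold hMaj
  calc _ ≤ ∫⁻ y, (ENNReal.ofReal (etaKer n t m (x - y)) * ENNReal.ofReal s
          + ENNReal.ofReal s * ENNReal.ofReal |f y| ^ p y) := by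
        refine lintegral_mono_ae ?_
        filter_upwards [hqp] with y hy
        have hk := eta_nonneg n ht m (x - y)
        have hk2 := eta_le n ht hm0 (x - y)
        rw [ENNReal.ofReal_rpow_of_nonneg (abs_nonneg _) (by linarith), ← ENNReal.ofReal_mul hk,
          ← ENNReal.ofReal_mul hk, ← ENNReal.ofReal_mul hs0.le,
          ← ENNReal.ofReal_add (by positivity) (by positivity)]
        apply ENNReal.ofReal_le_ofReal
        calc _ ≤ etaKer n t m (x - y) * (s + s ^ (1 - q) * |f y| ^ p y) := by
              gcongr
              exact split_pt (abs_nonneg _) hs hq hy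
          _ = etaKer n t m (x - y) * s + etaKer n t m (x - y) * (s ^ (1 - q) * |f y| ^ p y) := by ring
          _ ≤ etaKer n t m (x - y) * s + T * (s ^ (1 - q) * |f y| ^ p y) := by gcongr
          _ = _ := by rw [← mul_assoc T, hTs]
    _ ≤ ENNReal.ofReal (kerC n m) * ENNReal.ofReal s + ENNReal.ofReal s * 1 := by
        rw [lintegral_add_left, lintegral_mul_const' _ _ ENNReal.ofReal_ne_top,
          lintegral_const_mul' _ _ ENNReal.ofReal_ne_top,
          lintegral_sub_left_eq_self (fun y => ENNReal.ofReal (etaKer n t m y)) x, eta_lintegral n ht hm]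
        · gcongr
          exact hp
        · have := eta_meas n t m
          fun_prop
    _ = _ := by
        have := kerC_nonneg n m
        rw [mul_one, ← ENNReal.ofReal_mul this, ← ENNReal.ofReal_add (by positivity) hs0.le]
        congr 1; ring

lemma modular_core (n : ℕ) {t m : ℝ} (ht : 0 < t) (hm : (n : ℝ) < m) {f r : Esp n → ℝ} {z th : ℝ}
    (hf : AEMeasurable f volume) (h1 : ∫⁻ y, ENNReal.ofReal |f y| ≤ 1)
    (hz : ∀ x, hMaj n t m f x ≤ ENNReal.ofReal ((kerC n m + 1) * (t ^ (-(n : ℝ))) ^ z))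
    (hr1 : ∀ x, 1 ≤ r x)
    (hpt : ∀ᵐ x, ∀ v, 0 ≤ v → v ≤ t ^ (-(n : ℝ)) → v ≤ (t ^ (-(n : ℝ))) ^ z →
      (v / (t ^ (-(n : ℝ))) ^ th) ^ r x ≤ v) :
    vMod n r (fun x => convR n (etaKer n t m) f x /
      ((kerC n m + 1) ^ 2 * (t ^ (-(n : ℝ))) ^ th)) ≤ 1 := by
  have hk := kerC_nonneg n m
  set c := kerC n m + 1 with hc
  have hc1 : 1 ≤ c := by linarith
  have hc0 : 0 < c := by linarith
  set T := t ^ (-(n : ℝ)) with hTdef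
  have hT0 : 0 < T := by positivity
  unfold vMod
  calc _ ≤ ∫⁻ x, ENNReal.ofReal (1 / c) * hMaj n t m f x := by
        refine lintegral_mono_ae ?_
        filter_upwards [hpt] with x hx
        have hg := conv_le n ht m f x
        have hgT := hg.trans (hMaj_le1 n ht hm h1 x)
        have hgz := hg.trans (hz x)
        refine le_trans ?_ (mul_le_mul_right hg _)
        rw [ENNReal.ofReal_le_ofReal_iff (by positivity)] at hgT hgz
        rw [abs_div, abs_of_pos (show 0 < c ^ 2 * T ^ th by positivity)]
        set u := |convR n (etaKer n t m) f x|
        have hu : 0 ≤ u := abs_nonneg _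
        have hr0 : 1 ≤ r x := hr1 x
        rw [ENNReal.ofReal_rpow_of_nonneg (by positivity) (by linarith),
          ← ENNReal.ofReal_mul (by positivity)]
        apply ENNReal.ofReal_le_ofReal
        have hle : u / c ≤ u := div_le_self hu hc1
        have key := hx (u / c) (by positivity) (hle.trans hgT) (by rw [div_le_iff₀ hc0]; linarith)
        have e : u / (c ^ 2 * T ^ th) = (1 / c) * (u / c / T ^ th) := by field_simp
        rw [e, Real.mul_rpow (by positivity) (by positivity)]
        refine mul_le_mul ?_ (key.trans hle) (by positivity) (by positivity)
        calc (1 / c) ^ r x ≤ (1 / c) ^ (1 : ℝ) :=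
              Real.rpow_le_rpow_of_exponent_ge (by positivity) (by rw [div_le_one hc0]; exact hc1) hr0
          _ = 1 / c := Real.rpow_one _
    _ ≤ ENNReal.ofReal (1 / c) * ENNReal.ofReal (kerC n m) := by
        rw [lintegral_const_mul' _ _ ENNReal.ofReal_ne_top]
        gcongr
        exact hMaj_lintegral n ht hm hf h1
    _ ≤ 1 := by
        rw [← ENNReal.ofReal_mul (by positivity), ENNReal.ofReal_le_one, one_div_mul_eq_div, div_le_one hc0]
        linarith

lemma vMod_of_gt (n : ℕ) {p f : Esp n → ℝ} (hp : ∀ x, 1 ≤ p x) (hf : MemVLp n p f) {l : ℝ}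
    (hl : luxNorm n p f < l) : 0 < l ∧ vMod n p (fun x => f x / l) ≤ 1 := by
  obtain ⟨a, ⟨ha0, ha⟩, hal⟩ := exists_lt_of_csInf_lt hf.2 hl
  refine ⟨ha0.trans hal, le_trans ?_ ha⟩
  unfold vMod
  refine lintegral_mono fun x => ?_
  have := hp x
  dsimp only
  rw [abs_div, abs_div, abs_of_pos ha0, abs_of_pos (ha0.trans hal)]
  gcongr

lemma luxNorm_nonneg (n : ℕ) (p f : Esp n → ℝ) : 0 ≤ luxNorm n p f :=
  Real.sInf_nonneg fun _ h => h.1.le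

lemma luxNorm_le (n : ℕ) {p f : Esp n → ℝ} {l : ℝ} (hl : 0 < l)
    (h : vMod n p (fun x => f x / l) ≤ 1) : luxNorm n p f ≤ l :=
  csInf_le ⟨0, fun _ h => h.1.le⟩ ⟨hl, h⟩

/-- Theorem 3.9(2) of the paper: `‖η_{τ,m} * f‖_{L^{r(·)}} ≤ C τ^{-nϑ(τ)} ‖f‖_{L^{p(·)} ∩ L^1}`.
Here `pp = essSup p` (with the convention `1/p⁺ = 0` when `p⁺ = ∞`, which matches Lean's
`essSup = 0` for essentially unbounded real-valued `p ≥ 1` together with `1/0 = 0`),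
and similarly for `rp`. -/
theorem statement6 (n : ℕ) (hn : 1 ≤ n) (m : ℝ) (hm : (n : ℝ) < m)
    (r pexp : Esp n → ℝ) (hrmeas : Measurable r) (hpmeas : Measurable pexp)
    (hr1 : ∀ x, 1 ≤ r x) (hp1 : ∀ x, 1 ≤ pexp x)
    (rm rp pm pp : ℝ)
    (hrm : rm = essInf r volume) (hrp : rp = essSup r volume)
    (hpm : pm = essInf pexp volume) (hpp : pp = essSup pexp volume) :
    ∃ C : ℝ, 0 < C ∧ ∀ τ : ℝ, 0 < τ → ∀ f : Esp n → ℝ,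
      MemVLp n pexp f → MemVLp n (fun _ => (1 : ℝ)) f →
      luxNorm n r (convR n (etaKer n τ m) f) ≤
        C * τ ^ (-(n : ℝ) *
          (if (τ ≤ 1 ∧ 1 - 1 / rm ≤ (if τ ≤ 1 then 1 / pm else 1 / pp)) ∨
              (1 < τ ∧ (if τ ≤ 1 then 1 / pm else 1 / pp) < 1 - 1 / rm) then
            (rm / rp) * (1 - 1 / rm) +
              (if τ ≤ 1 then 1 / pm else 1 / pp) * (1 - rm / rp)
          else 1 - 1 / rm)) *
        max (luxNorm n pexp f) (luxNorm n (fun _ => (1 : ℝ)) f) := by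
  obtain ⟨hrm1, hrmle⟩ := aux_essInf hr1
  obtain ⟨hpm1, hpmle⟩ := aux_essInf hp1
  have hrpc := aux_essSup hr1
  have hppc := aux_essSup hp1
  rw [← hrm] at hrm1 hrmle
  rw [← hpm] at hpm1 hpmle
  rw [← hrp] at hrpc
  rw [← hpp] at hppc
  have hk := kerC_nonneg n m
  refine ⟨(kerC n m + 1) ^ 2, by positivity, ?_⟩
  intro τ hτ f hfp hf1
  set z : ℝ := if τ ≤ 1 then 1 / pm else 1 / pp with hzdef
  set th : ℝ := if (τ ≤ 1 ∧ 1 - 1 / rm ≤ z) ∨ (1 < τ ∧ z < 1 - 1 / rm) then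
            (rm / rp) * (1 - 1 / rm) + z * (1 - rm / rp)
          else 1 - 1 / rm with hth
  have hT0 : 0 < τ ^ (-(n : ℝ)) := by positivity
  rw [Real.rpow_mul hτ.le]
  -- the exponent inequality
  have hpt : ∀ᵐ x, ∀ v, 0 ≤ v → v ≤ τ ^ (-(n : ℝ)) → v ≤ (τ ^ (-(n : ℝ))) ^ z →
      (v / (τ ^ (-(n : ℝ))) ^ th) ^ r x ≤ v := by
    have hsr : ∀ᵐ x, rm / rp * r x ≤ rm := by
      rcases hrpc with h0 | ⟨h0, h⟩
      · refine Eventually.of_forall fun x => ?_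
        rw [h0]; simp; linarith
      · filter_upwards [h] with x hx
        rw [div_mul_eq_mul_div, div_le_iff₀ (by linarith)]
        gcongr
    filter_upwards [hrmle, hsr] with x hx hxs v hv hvT hvz
    by_cases hcond : (τ ≤ 1 ∧ 1 - 1 / rm ≤ z) ∨ (1 < τ ∧ z < 1 - 1 / rm)
    · rw [hth, if_pos hcond]
      refine aux_B hT0 hv hvT hrm1 hvz ?_ hx hxs
      rcases hcond with ⟨h1, h2⟩ | ⟨h1, h2⟩
      · exact Real.rpow_le_rpow_of_exponent_le
          (Real.one_le_rpow_of_pos_of_le_one_of_nonpos hτ h1 (by simp)) h2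
      · exact Real.rpow_le_rpow_of_exponent_ge hT0
          (Real.rpow_le_one_of_one_le_of_nonpos h1.le (by simp)) h2.le
    · rw [hth, if_neg hcond]
      refine aux_A hT0 hv hvT hrm1 hvz ?_ hx
      push Not at hcond
      rcases le_or_gt τ 1 with h1 | h1
      · exact Real.rpow_le_rpow_of_exponent_le
          (Real.one_le_rpow_of_pos_of_le_one_of_nonpos hτ h1 (by simp)) (hcond.1 h1).le
      · exact Real.rpow_le_rpow_of_exponent_ge hT0
          (Real.rpow_le_one_of_one_le_of_nonpos h1.le (by simp)) (hcond.2 h1)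
  set c := (kerC n m + 1) ^ 2 * (τ ^ (-(n : ℝ))) ^ th with hc
  have hc0 : 0 < c := by positivity
  set N := max (luxNorm n pexp f) (luxNorm n (fun _ => (1 : ℝ)) f) with hN
  suffices hs : ∀ l, N < l → luxNorm n r (convR n (etaKer n τ m) f) ≤ c * l by
    have : luxNorm n r (convR n (etaKer n τ m) f) / c ≤ N := by
      refine le_of_forall_gt_imp_ge_of_dense fun l hl => ?_
      rw [div_le_iff₀ hc0, mul_comm]
      exact hs l hl
    rw [div_le_iff₀ hc0] at this
    linarith
  intro l hl
  obtain ⟨hl0, hlp⟩ := vMod_of_gt n hp1 hfp (lt_of_le_of_lt (le_max_left _ _) hl)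
  obtain ⟨-, hl1⟩ := vMod_of_gt n (fun _ => le_refl _) hf1 (lt_of_le_of_lt (le_max_right _ _) hl)
  have h1 : ∫⁻ y, ENNReal.ofReal |f y / l| ≤ 1 := by
    simpa [vMod] using hl1
  have hz : ∀ x, hMaj n τ m (fun y => f y / l) x ≤
      ENNReal.ofReal ((kerC n m + 1) * (τ ^ (-(n : ℝ))) ^ z) := by
    intro x
    rcases le_or_gt τ 1 with ht | ht
    · rw [hzdef, if_pos ht]
      exact hMaj_le2 n hτ ht hm hpm1 hpmle hlp x
    · refine (hMaj_le1 n hτ hm h1 x).trans (ENNReal.ofReal_le_ofReal ?_)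
      have hz1 : z ≤ 1 := by
        rw [hzdef, if_neg (not_le.2 ht)]
        rcases hppc with h | ⟨h, -⟩
        · rw [h]; simp
        · rw [div_le_one (by linarith)]; exact h
      have : τ ^ (-(n : ℝ)) ≤ (τ ^ (-(n : ℝ))) ^ z := by
        conv_lhs => rw [← Real.rpow_one (τ ^ (-(n : ℝ)))]
        exact Real.rpow_le_rpow_of_exponent_ge hT0
          (Real.rpow_le_one_of_one_le_of_nonpos ht.le (by simp)) hz1
      have h0 : 0 ≤ kerC n m * (τ ^ (-(n : ℝ))) ^ z := by positivity
      linarith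
  have hmod := modular_core n hτ hm (hfp.1.div_const l) h1 hz hr1 hpt
  refine luxNorm_le n (by positivity) ?_
  refine le_of_eq_of_le ?_ hmod
  congr 1
  funext x
  rw [← hc]
  have : convR n (etaKer n τ m) (fun y => f y / l) x = convR n (etaKer n τ m) f x / l := by
    unfold convR
    rw [← integral_div]
    congr 1
    funext y
    ring
  rw [this, div_div, mul_comm l c]
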